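/- (Forward propagation at random initialization.) There exist absolute constants C, c > 0 such that, provided m ≥ C, for every ε ∈ (0,1], with probability at least 1 − C·n·L·e^{−c·m·ε²/L} over the random matrices A and W_1,…,W_L, one has ‖h_{i,ℓ}‖ ∈ [1 − ε, 1 + ε] for all i ∈ [n] and all ℓ ∈ {0, 1, …, L}. -/

import Mathlib

/-!
Conditionally on `h_{ℓ-1}`, the entries of `W_ℓ h_{ℓ-1}` are i.i.d. `N(0, 2‖h_{ℓ-1}‖²/m)`, so
`‖h_ℓ‖²` has conditional mean `‖h_{ℓ-1}‖²` and `‖h_ℓ‖² - 1` is a martingale (with starting value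
`‖h_0‖² - 1`, using `‖x‖ = 1`). Its increments are sums of `m` independent sub-exponential
variables, and on `‖h_{ℓ-1}‖² ≤ 2` they satisfy
`E exp (t (‖h_ℓ‖² - ‖h_{ℓ-1}‖²)) ≤ exp (24 t² / m)` for `|t| ≤ m / 32` (`lintegral_exp_layer`).

Dropping the increments that follow a step with `‖h_{ℓ-1}‖² > 2` gives a truncated martingale `dev`
for which `E exp (t · dev_ℓ) ≤ exp (24 t² (ℓ + 1) / m)` holds unconditionally (`lintegral_exp_dev`).
The Chernoff bound with `t = m ε / (96 L)` yields `P(±dev_ℓ ≥ ε) ≤ exp (-m ε² / (192 L))`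
(`initAW_dev_tail`). If `|dev_ℓ| ≤ ε ≤ 1` for every `ℓ ≤ L`, an induction shows that the truncation
is never active, so `dev_ℓ = ‖h_ℓ‖² - 1` (`nsq_hseq_eq`), and
`|‖h_ℓ‖ - 1| ≤ |‖h_ℓ‖² - 1| ≤ ε`. A union bound over the two signs, the `n` samples and the
`L + 1 ≤ 2L` layers gives the result with `C = 4` and `c = 1/192`.
-/

open MeasureTheory ProbabilityTheory

noncomputable section

namespace DNNPaper

/-! ### Elementary linear algebra on plain function matrices -/

def mulVec {p q : ℕ} (M : Fin p → Fin q → ℝ) (v : Fin q → ℝ) : Fin p → ℝ :=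
  fun i => ∑ j, M i j * v j

def mmul {p q r : ℕ} (M : Fin p → Fin q → ℝ) (N : Fin q → Fin r → ℝ) :
    Fin p → Fin r → ℝ :=
  fun i k => ∑ j, M i j * N j k

def transpose {p q : ℕ} (M : Fin p → Fin q → ℝ) : Fin q → Fin p → ℝ :=
  fun j i => M i j

def dot {p : ℕ} (u v : Fin p → ℝ) : ℝ := ∑ i, u i * v i

def outer {p q : ℕ} (u : Fin p → ℝ) (v : Fin q → ℝ) : Fin p → Fin q → ℝ :=
  fun i j => u i * v j

def idMat (p : ℕ) : Fin p → Fin p → ℝ := fun i j => if i = j then 1 else 0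

def diagMat {p : ℕ} (dg : Fin p → ℝ) : Fin p → Fin p → ℝ :=
  fun i j => if i = j then dg i else 0

def relu {p : ℕ} (v : Fin p → ℝ) : Fin p → ℝ := fun k => max (v k) 0

/-- diagonal entries of the ReLU sign matrix of a pre-activation vector -/
def signOf {p : ℕ} (g : Fin p → ℝ) : Fin p → ℝ := fun k => if 0 ≤ g k then 1 else 0

/-- Euclidean norm -/
def l2 {p : ℕ} (v : Fin p → ℝ) : ℝ := Real.sqrt (∑ k, v k ^ 2)

/-- max-norm -/
def linf {p : ℕ} (v : Fin p → ℝ) : ℝ := ⨆ k, |v k|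

/-- number of nonzero entries -/
def l0 {p : ℕ} (v : Fin p → ℝ) : ℕ := (Finset.univ.filter fun k => v k ≠ 0).card

/-- Frobenius norm -/
def frob {p q : ℕ} (M : Fin p → Fin q → ℝ) : ℝ := Real.sqrt (∑ i, ∑ j, M i j ^ 2)

/-- spectral norm (ℓ₂ operator norm) -/
def spec {p q : ℕ} (M : Fin p → Fin q → ℝ) : ℝ :=
  sSup {r | ∃ v : Fin q → ℝ, l2 v ≤ 1 ∧ r = l2 (mulVec M v)}

/-- trace (Frobenius) inner product -/
def innerF {p q : ℕ} (M N : Fin p → Fin q → ℝ) : ℝ := ∑ i, ∑ j, M i j * N i j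

/-- `‖W‖₂ = max_ℓ ‖W_ℓ‖₂` for a tuple of matrices -/
def tupleSpec {m L : ℕ} (W : Fin L → Fin m → Fin m → ℝ) : ℝ := ⨆ ℓ, spec (W ℓ)

/-! ### The network -/

variable {𝔡 m d L : ℕ}

/-- `Wat W ℓ` is the weight matrix of layer `ℓ ∈ {1,…,L}` (identity outside this range). -/
def Wat (W : Fin L → Fin m → Fin m → ℝ) (ℓ : ℕ) : Fin m → Fin m → ℝ :=
  if h : 1 ≤ ℓ ∧ ℓ ≤ L then W ⟨ℓ - 1, by omega⟩ else idMat m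

/-- the forward (post-activation) vectors `h_ℓ`, `ℓ = 0,1,…,L` -/
def hseq (A : Fin m → Fin 𝔡 → ℝ) (W : Fin L → Fin m → Fin m → ℝ) (x : Fin 𝔡 → ℝ) :
    ℕ → Fin m → ℝ
  | 0 => relu (mulVec A x)
  | ℓ + 1 =>
      if ℓ + 1 ≤ L then relu (mulVec (Wat W (ℓ + 1)) (hseq A W x ℓ)) else hseq A W x ℓ

/-- the pre-activation vectors `g_ℓ`, `ℓ = 0,1,…,L` -/
def gseq (A : Fin m → Fin 𝔡 → ℝ) (W : Fin L → Fin m → Fin m → ℝ) (x : Fin 𝔡 → ℝ) :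
    ℕ → Fin m → ℝ
  | 0 => mulVec A x
  | ℓ + 1 => mulVec (Wat W (ℓ + 1)) (hseq A W x ℓ)

/-- `chainProd W Dfun a b = (D_b W_b) (D_{b-1} W_{b-1}) ⋯ (D_a W_a)` where `D_ℓ` is the
diagonal matrix with entries `Dfun ℓ`; it is the identity when `b < a`, and factors with
index outside `{1,…,L}` are skipped. -/
def chainProd (W : Fin L → Fin m → Fin m → ℝ) (Dfun : ℕ → Fin m → ℝ) (a : ℕ) :
    ℕ → Fin m → Fin m → ℝ
  | 0 => idMat m
  | b + 1 =>
      if a ≤ b + 1 ∧ b + 1 ≤ L then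
        mmul (mmul (diagMat (Dfun (b + 1))) (Wat W (b + 1))) (chainProd W Dfun a b)
      else chainProd W Dfun a b

/-- `prodDW A W x a b = D_b W_b D_{b-1} W_{b-1} ⋯ D_a W_a` with the sign matrices of input `x` -/
def prodDW (A : Fin m → Fin 𝔡 → ℝ) (W : Fin L → Fin m → Fin m → ℝ) (x : Fin 𝔡 → ℝ)
    (a b : ℕ) : Fin m → Fin m → ℝ :=
  chainProd W (fun ℓ => signOf (gseq A W x ℓ)) a b

/-- `Back_ℓ = B D_L W_L ⋯ D_ℓ W_ℓ` (equal to `B` for `ℓ = L+1`) -/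
def backMat (B : Fin d → Fin m → ℝ) (A : Fin m → Fin 𝔡 → ℝ)
    (W : Fin L → Fin m → Fin m → ℝ) (x : Fin 𝔡 → ℝ) (ℓ : ℕ) : Fin d → Fin m → ℝ :=
  mmul B (prodDW A W x ℓ L)

/-- formula gradient w.r.t. `W_ℓ` with an arbitrary (fake) loss vector `v`:
`D_ℓ (Back_{ℓ+1}ᵀ v) h_{ℓ-1}ᵀ` -/
def gradW (B : Fin d → Fin m → ℝ) (A : Fin m → Fin 𝔡 → ℝ)
    (W : Fin L → Fin m → Fin m → ℝ) (x : Fin 𝔡 → ℝ) (v : Fin d → ℝ) (ℓ : ℕ) :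
    Fin m → Fin m → ℝ :=
  outer (mulVec (diagMat (signOf (gseq A W x ℓ)))
      (mulVec (transpose (backMat B A W x (ℓ + 1))) v))
    (hseq A W x (ℓ - 1))

/-- loss vector `B h_L − y` -/
def lossVec (B : Fin d → Fin m → ℝ) (A : Fin m → Fin 𝔡 → ℝ)
    (W : Fin L → Fin m → Fin m → ℝ) (x : Fin 𝔡 → ℝ) (y : Fin d → ℝ) : Fin d → ℝ :=
  fun j => mulVec B (hseq A W x L) j - y j

/-- per-sample ℓ₂ regression loss `F_i` -/
def objFi (B : Fin d → Fin m → ℝ) (A : Fin m → Fin 𝔡 → ℝ)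
    (W : Fin L → Fin m → Fin m → ℝ) (x : Fin 𝔡 → ℝ) (y : Fin d → ℝ) : ℝ :=
  (1 / 2) * l2 (lossVec B A W x y) ^ 2

/-- total objective `F` -/
def objF {n : ℕ} (B : Fin d → Fin m → ℝ) (A : Fin m → Fin 𝔡 → ℝ)
    (W : Fin L → Fin m → Fin m → ℝ) (x : Fin n → Fin 𝔡 → ℝ)
    (y : Fin n → Fin d → ℝ) : ℝ :=
  ∑ i, objFi B A W (x i) (y i)

/-- formula gradient of the total objective w.r.t. `W_ℓ` -/
def gradF {n : ℕ} (B : Fin d → Fin m → ℝ) (A : Fin m → Fin 𝔡 → ℝ)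
    (W : Fin L → Fin m → Fin m → ℝ) (x : Fin n → Fin 𝔡 → ℝ)
    (y : Fin n → Fin d → ℝ) (ℓ : ℕ) : Fin m → Fin m → ℝ :=
  ∑ i, gradW B A W (x i) (lossVec B A W (x i) (y i)) ℓ

/-! ### Random initialization -/

/-- a `p × q` random matrix with i.i.d. `N(0, v)` entries -/
def gaussMat (p q : ℕ) (v : NNReal) : Measure (Fin p → Fin q → ℝ) :=
  Measure.pi fun _ => Measure.pi fun _ => gaussianReal 0 v

/-- joint law of `(A, W)` at random initialization -/
def initAW (𝔡 m L : ℕ) :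
    Measure ((Fin m → Fin 𝔡 → ℝ) × (Fin L → Fin m → Fin m → ℝ)) :=
  (gaussMat m 𝔡 (2 / m)).prod (Measure.pi fun _ : Fin L => gaussMat m m (2 / m))

/-- joint law of `(A, W, B)` at random initialization -/
def initMeasure (𝔡 m d L : ℕ) :
    Measure ((Fin m → Fin 𝔡 → ℝ) ×
      (Fin L → Fin m → Fin m → ℝ) × (Fin d → Fin m → ℝ)) :=
  (gaussMat m 𝔡 (2 / m)).prod
    ((Measure.pi fun _ : Fin L => gaussMat m m (2 / m)).prod (gaussMat d m (1 / d)))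


/-! ### Moment generating function of one layer -/

instance isProbabilityMeasure_gaussMat (p q : ℕ) (v : NNReal) :
    IsProbabilityMeasure (gaussMat p q v) := by
  unfold gaussMat; infer_instance

/-- A Gaussian row paired with a fixed vector `h` is a centred Gaussian of variance `v ‖h‖²`
(comparison of characteristic functions). -/
lemma map_row_gaussian {q : ℕ} (v : NNReal) (h : Fin q → ℝ) :
    (Measure.pi fun _ : Fin q => gaussianReal 0 v).map (fun g => ∑ j, g j * h j) =
      gaussianReal 0 (v * (∑ j, h j ^ 2).toNNReal) := by
  have hmeas : Measurable fun g : Fin q → ℝ => ∑ j, g j * h j := by fun_prop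
  have := Measure.isProbabilityMeasure_map
    (μ := Measure.pi fun _ : Fin q => gaussianReal 0 v) hmeas.aemeasurable
  apply Measure.ext_of_charFun
  ext t
  rw [charFun_apply_real, integral_map hmeas.aemeasurable (by fun_prop), charFun_gaussianReal]
  have h1 : ∀ g : Fin q → ℝ, Complex.exp (t * ((∑ j, g j * h j : ℝ) : ℂ) * Complex.I) =
      ∏ j, Complex.exp (((t * h j : ℝ) : ℂ) * (g j : ℂ) * Complex.I) := by
    intro g
    rw [← Complex.exp_sum]
    congr 1
    push_cast
    rw [Finset.mul_sum, Finset.sum_mul]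
    exact Finset.sum_congr rfl fun j _ => by ring
  simp_rw [h1]
  rw [integral_fintype_prod_eq_prod
    (f := fun j (y : ℝ) => Complex.exp (((t * h j : ℝ) : ℂ) * (y : ℂ) * Complex.I))]
  simp_rw [← charFun_apply_real, charFun_gaussianReal]
  rw [← Complex.exp_sum]
  congr 1
  have h2 : (((v * (∑ j, h j ^ 2).toNNReal : NNReal) : ℝ) : ℂ) = v * ∑ j, (h j : ℂ) ^ 2 := by
    rw [NNReal.coe_mul, Real.coe_toNNReal _ (Finset.sum_nonneg fun j _ => sq_nonneg _)]
    push_cast; rfl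
  -- The coercion `ℝ≥0 → ℂ` factors through `ℝ` definitionally.
  have h3 : ((v * (∑ j, h j ^ 2).toNNReal : NNReal) : ℂ) =
    (((v * (∑ j, h j ^ 2).toNNReal : NNReal) : ℝ) : ℂ) := rfl
  rw [h3, h2]
  push_cast
  rw [Finset.mul_sum, Finset.sum_mul, Finset.sum_div, mul_zero, zero_mul, zero_sub,
    ← Finset.sum_neg_distrib]
  exact Finset.sum_congr rfl fun j _ => by ring

/-- Upper bound for the moment generating function `(1 - 2u)^(-1/2)` of a squared standard
Gaussian. -/
lemma lintegral_exp_sq_gaussian (u : ℝ) (hu : |u| ≤ 1 / 8) :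
    ∫⁻ g, ENNReal.ofReal (Real.exp (u * g ^ 2)) ∂gaussianReal 0 1 ≤
      ENNReal.ofReal (1 + u + 3 * u ^ 2) := by
  obtain ⟨hu1, hu2⟩ := abs_le.mp hu
  have hb : 0 < 1 / 2 - u := by linarith
  rw [gaussianReal_of_var_ne_zero 0 one_ne_zero,
    lintegral_withDensity_eq_lintegral_mul _ (measurable_gaussianPDF 0 1) (by fun_prop)]
  have h1 : ∀ g : ℝ, (gaussianPDF 0 1 * fun g => ENNReal.ofReal (Real.exp (u * g ^ 2))) g =
      ENNReal.ofReal ((Real.sqrt (2 * Real.pi))⁻¹ * Real.exp (-(1 / 2 - u) * g ^ 2)) := by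
    intro g
    simp only [Pi.mul_apply, gaussianPDF, gaussianPDFReal]
    rw [← ENNReal.ofReal_mul (by positivity), mul_assoc, ← Real.exp_add]
    simp only [NNReal.coe_one, mul_one, sub_zero]
    congr 3
    ring
  simp_rw [h1]
  rw [← ofReal_integral_eq_lintegral_ofReal ((integrable_exp_neg_mul_sq hb).const_mul _)
    (ae_of_all _ fun g => by positivity), integral_const_mul, integral_gaussian]
  apply ENNReal.ofReal_le_ofReal
  rw [← Real.sqrt_inv, ← Real.sqrt_mul (by positivity)]
  apply Real.sqrt_le_iff.mpr
  have hu0 : 0 < 1 - 2 * u := by linarith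
  refine ⟨by nlinarith [sq_nonneg u], ?_⟩
  have h2 : (2 * Real.pi)⁻¹ * (Real.pi / (1 / 2 - u)) = 1 / (1 - 2 * u) := by
    have := Real.pi_pos.ne'
    field_simp
  rw [h2, div_le_iff₀ hu0]
  -- `(1 - 2u)(1 + u + 3u²)² - 1 = u² (3 - 8u - 3u² - 18u³)`.
  have h3 : 0 ≤ 3 - 8 * u - 3 * u ^ 2 - 18 * u ^ 3 := by
    have : u ^ 2 ≤ 1 / 64 := by nlinarith
    nlinarith [mul_nonneg (sq_nonneg u) (by linarith : 0 ≤ 1/8 - u)]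
  nlinarith [mul_nonneg (sq_nonneg u) h3]

/-- The centred variable `relu(g)² - 1/2` is sub-exponential. By the symmetry `g ↦ -g` and
`exp (u relu(g)²) + exp (u relu(-g)²) = 1 + exp (u g²)`, this reduces to the unrectified square. -/
lemma lintegral_exp_relu_sq_gaussian (u : ℝ) (hu : |u| ≤ 1 / 8) :
    ∫⁻ g, ENNReal.ofReal (Real.exp (u * (max g 0 ^ 2 - 1 / 2))) ∂gaussianReal 0 1 ≤
      ENNReal.ofReal (Real.exp (3 / 2 * u ^ 2)) := by
  obtain ⟨hu1, hu2⟩ := abs_le.mp hu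
  set F : ℝ → ENNReal := fun g => ENNReal.ofReal (Real.exp (u * max g 0 ^ 2)) with hF
  have hFm : Measurable F := by fun_prop
  have hneg : ∫⁻ g, F (-g) ∂gaussianReal 0 1 = ∫⁻ g, F g ∂gaussianReal 0 1 := by
    have := lintegral_map (μ := gaussianReal 0 1) hFm (measurable_neg (G := ℝ))
    rw [← this]
    congr 1
    simpa using (gaussianReal_map_neg (μ := 0) (v := 1))
  have hsum : ∀ g, F g + F (-g) = 1 + ENNReal.ofReal (Real.exp (u * g ^ 2)) := by
    intro g
    rcases le_total g 0 with hg | hg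
    · simp only [hF]
      rw [max_eq_right hg, max_eq_left (by linarith)]
      simp
    · simp only [hF]
      rw [max_eq_left hg, max_eq_right (by linarith)]
      simp [add_comm]
  have htwo : 2 * ∫⁻ g, F g ∂gaussianReal 0 1 ≤ ENNReal.ofReal (2 + u + 3 * u ^ 2) := by
    calc 2 * ∫⁻ g, F g ∂gaussianReal 0 1
        = ∫⁻ g, (F g + F (-g)) ∂gaussianReal 0 1 := by
          rw [lintegral_add_left hFm, hneg, two_mul]
      _ = 1 + ∫⁻ g, ENNReal.ofReal (Real.exp (u * g ^ 2)) ∂gaussianReal 0 1 := by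
          simp_rw [hsum]
          rw [lintegral_add_left measurable_const]
          simp
      _ ≤ 1 + ENNReal.ofReal (1 + u + 3 * u ^ 2) := by
          gcongr
          exact lintegral_exp_sq_gaussian u hu
      _ = ENNReal.ofReal (2 + u + 3 * u ^ 2) := by
          rw [← ENNReal.ofReal_one, ← ENNReal.ofReal_add zero_le_one (by nlinarith)]
          congr 1; ring
  have hone : ∫⁻ g, F g ∂gaussianReal 0 1 ≤ ENNReal.ofReal (Real.exp (u / 2 + 3 / 2 * u ^ 2)) := by
    have h2 : (2 : ENNReal) * ∫⁻ g, F g ∂gaussianReal 0 1 ≤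
        2 * ENNReal.ofReal (Real.exp (u / 2 + 3 / 2 * u ^ 2)) := by
      refine htwo.trans ?_
      rw [show (2 : ENNReal) = ENNReal.ofReal 2 by simp, ← ENNReal.ofReal_mul (by norm_num)]
      apply ENNReal.ofReal_le_ofReal
      linarith [Real.add_one_le_exp (u / 2 + 3 / 2 * u ^ 2)]
    exact (ENNReal.mul_le_mul_iff_right (by simp) (by simp)).mp h2
  have hsplit : ∀ g : ℝ, ENNReal.ofReal (Real.exp (u * (max g 0 ^ 2 - 1 / 2))) =
      ENNReal.ofReal (Real.exp (-u / 2)) * F g := by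
    intro g
    rw [hF, ← ENNReal.ofReal_mul (by positivity), ← Real.exp_add]
    congr 2; ring
  simp_rw [hsplit]
  rw [lintegral_const_mul _ hFm]
  calc _ ≤ ENNReal.ofReal (Real.exp (-u / 2)) *
        ENNReal.ofReal (Real.exp (u / 2 + 3 / 2 * u ^ 2)) := by gcongr
    _ = _ := by
      rw [← ENNReal.ofReal_mul (by positivity), ← Real.exp_add]
      congr 2; ring

lemma lintegral_exp_relu_sq_gaussianReal (v : NNReal) (θ : ℝ) (hθ : |θ * v| ≤ 1 / 8) :
    ∫⁻ g, ENNReal.ofReal (Real.exp (θ * (max g 0 ^ 2 - v / 2))) ∂gaussianReal 0 v ≤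
      ENNReal.ofReal (Real.exp (3 / 2 * (θ * v) ^ 2)) := by
  have hmap : (gaussianReal 0 1).map (fun g => Real.sqrt v * g) = gaussianReal 0 v := by
    rw [gaussianReal_map_const_mul]
    congr 1
    · simp
    · ext; simp
  rw [← hmap, lintegral_map (by fun_prop) (by fun_prop)]
  refine le_of_eq_of_le ?_ (lintegral_exp_relu_sq_gaussian (θ * v) hθ)
  congr with g
  congr 2
  have : max (Real.sqrt v * g) 0 = Real.sqrt v * max g 0 := by
    rw [mul_max_of_nonneg _ _ (Real.sqrt_nonneg _), mul_zero]
  rw [this, mul_pow, Real.sq_sqrt v.coe_nonneg]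
  ring

/-- The squared Euclidean norm `‖v‖²`. -/
def nsq {p : ℕ} (v : Fin p → ℝ) : ℝ := ∑ k, v k ^ 2

lemma nsq_nonneg {p : ℕ} (v : Fin p → ℝ) : 0 ≤ nsq v := Finset.sum_nonneg fun _ _ => sq_nonneg _

/-- One layer applied to a fixed vector `h` with `‖h‖² ≤ 2`: the rows are independent, so the
moment generating function of `‖relu (G h)‖² - ‖h‖²` is a product of `m` one-dimensional ones. -/
lemma lintegral_exp_layer {m q : ℕ} (hm : 0 < m) (h : Fin q → ℝ) (t : ℝ)
    (hs : nsq h ≤ 2) (ht : |t| ≤ m / 32) :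
    ∫⁻ G, ENNReal.ofReal (Real.exp (t * (nsq (relu (mulVec G h)) - nsq h)))
      ∂gaussMat m q (2 / m) ≤ ENNReal.ofReal (Real.exp (24 * t ^ 2 / m)) := by
  have hm' : (0 : ℝ) < m := by exact_mod_cast hm
  set v : NNReal := 2 / m * (∑ j, h j ^ 2).toNNReal with hv
  have hvr : (v : ℝ) = 2 * nsq h / m := by
    rw [hv, NNReal.coe_mul, Real.coe_toNNReal _ (Finset.sum_nonneg fun j _ => sq_nonneg _)]
    simp only [nsq]; push_cast; ring
  have hv4 : (v : ℝ) ≤ 4 / m := by rw [hvr]; gcongr; linarith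
  have htv : |t * v| ≤ 4 * |t| / m := by
    rw [abs_mul, abs_of_nonneg v.coe_nonneg]
    calc |t| * v ≤ |t| * (4 / m) := by gcongr
      _ = _ := by ring
  set F : (Fin q → ℝ) → ENNReal := fun g =>
    ENNReal.ofReal (Real.exp (t * (max (∑ j, g j * h j) 0 ^ 2 - v / 2))) with hF
  have hprod : ∀ G : Fin m → Fin q → ℝ,
      ENNReal.ofReal (Real.exp (t * (nsq (relu (mulVec G h)) - nsq h))) = ∏ k, F (G k) := by
    intro G
    rw [hF, ← ENNReal.ofReal_prod_of_nonneg (fun _ _ => by positivity), ← Real.exp_sum,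
      ← Finset.mul_sum, Finset.sum_sub_distrib]
    congr 3
    simp only [nsq, relu, mulVec, Finset.sum_const, Finset.card_univ, Fintype.card_fin,
      nsmul_eq_mul]
    rw [hvr, nsq]
    field_simp
  simp_rw [hprod]
  have hFm : Measurable F := by fun_prop
  rw [gaussMat, lintegral_prod_eq_prod_lintegral_of_indepFun Finset.univ
    (fun k (G : Fin m → Fin q → ℝ) => F (G k))
    (iIndepFun_pi (X := fun _ => F) fun _ => hFm.aemeasurable)
    (fun k => hFm.comp (measurable_pi_apply k))]
  have hk : ∀ k : Fin m, ∫⁻ G : Fin m → Fin q → ℝ, F (G k) ∂(Measure.pi fun _ : Fin m =>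
      Measure.pi fun _ : Fin q => gaussianReal 0 (2 / m)) ≤
      ENNReal.ofReal (Real.exp (24 * t ^ 2 / m ^ 2)) := by
    intro k
    rw [(measurePreserving_eval (fun _ : Fin m =>
      Measure.pi fun _ : Fin q => gaussianReal 0 (2 / m)) k).lintegral_comp hFm]
    have hl := lintegral_map (μ := Measure.pi fun _ : Fin q => gaussianReal 0 (2 / m))
      (f := fun y : ℝ => ENNReal.ofReal (Real.exp (t * (max y 0 ^ 2 - v / 2))))
      (g := fun g : Fin q → ℝ => ∑ j, g j * h j) (by fun_prop) (by fun_prop)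
    rw [map_row_gaussian] at hl
    rw [hF, ← hl]
    refine (lintegral_exp_relu_sq_gaussianReal v t ?_).trans ?_
    · refine htv.trans ?_
      rw [div_le_iff₀ hm']
      linarith
    · apply ENNReal.ofReal_le_ofReal
      apply Real.exp_le_exp.mpr
      have : (t * v) ^ 2 ≤ (4 * |t| / m) ^ 2 := by
        rw [← sq_abs (t * v)]; gcongr
      calc 3 / 2 * (t * v) ^ 2 ≤ 3 / 2 * (4 * |t| / m) ^ 2 := by gcongr
        _ = _ := by rw [div_pow, mul_pow, sq_abs]; ring
  refine (Finset.prod_le_prod' fun k _ => hk k).trans ?_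
  rw [Finset.prod_const, Finset.card_univ, Fintype.card_fin, ← ENNReal.ofReal_pow (by positivity),
    ← Real.exp_nat_mul]
  apply ENNReal.ofReal_le_ofReal
  apply Real.exp_le_exp.mpr
  apply le_of_eq
  field_simp

/-- Integrating a coordinate of a product probability space out first: the `i`-th coordinate may
be replaced by an independent copy. -/
lemma lintegral_pi_resample {L : ℕ} {E : Type} [MeasurableSpace E] (μ : Measure E)
    [IsProbabilityMeasure μ] (i : Fin L) {f : (Fin L → E) → ENNReal} (hf : Measurable f) :
    ∫⁻ W, f W ∂(Measure.pi fun _ : Fin L => μ) =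
      ∫⁻ W, ∫⁻ w, f (Function.update W i w) ∂μ ∂(Measure.pi fun _ : Fin L => μ) := by
  obtain ⟨n, rfl⟩ : ∃ n, L = n + 1 := ⟨L - 1, by have := i.pos; omega⟩
  have hmp := (measurePreserving_piFinSuccAbove (fun _ : Fin (n + 1) => μ) i).symm
  have key : ∀ F : (Fin (n + 1) → E) → ENNReal, Measurable F →
      ∫⁻ W, F W ∂(Measure.pi fun _ : Fin (n + 1) => μ) =
        ∫⁻ w, ∫⁻ V, F (i.insertNth w V) ∂(Measure.pi fun _ : Fin n => μ) ∂μ := by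
    intro F hF
    rw [← hmp.lintegral_comp hF]
    exact lintegral_prod _ (hF.comp hmp.measurable).aemeasurable
  have hupd : Measurable fun p : (Fin (n + 1) → E) × E => f (Function.update p.1 i p.2) :=
    hf.comp measurable_update'
  rw [key _ hupd.lintegral_prod_right', key _ hf]
  simp only [Fin.update_insertNth, lintegral_const, measure_univ, mul_one]
  exact lintegral_lintegral_swap (hf.comp hmp.measurable).aemeasurable

/-! ### The truncated martingale of squared norms -/

lemma hseq_succ (A : Fin m → Fin 𝔡 → ℝ) (W : Fin L → Fin m → Fin m → ℝ) (x : Fin 𝔡 → ℝ)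
    {ℓ : ℕ} (h : ℓ < L) :
    hseq A W x (ℓ + 1) = relu (mulVec (W ⟨ℓ, h⟩) (hseq A W x ℓ)) := by
  have h1 : ℓ + 1 ≤ L := h
  simp [hseq, Wat, h1]

/-- The hidden vectors `h_0, …, h_i` do not depend on the weight matrix with index `i`
(that is, on `W_{i+1}`, since layers are numbered from `1`). -/
lemma hseq_update (A : Fin m → Fin 𝔡 → ℝ) (W : Fin L → Fin m → Fin m → ℝ) (x : Fin 𝔡 → ℝ)
    (i : Fin L) (w : Fin m → Fin m → ℝ) {ℓ : ℕ} (h : ℓ ≤ i) :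
    hseq A (Function.update W i w) x ℓ = hseq A W x ℓ := by
  induction ℓ with
  | zero => rfl
  | succ ℓ ih =>
    have hL : ℓ < L := by omega
    have hne : (⟨ℓ, hL⟩ : Fin L) ≠ i := by
      intro he; rw [← he] at h; simp at h
    rw [hseq_succ _ _ _ hL, hseq_succ _ _ _ hL, ih (by omega), Function.update_of_ne hne]

lemma measurable_hseq (x : Fin 𝔡 → ℝ) {ℓ : ℕ} (h : ℓ ≤ L) :
    Measurable fun z : (Fin m → Fin 𝔡 → ℝ) × (Fin L → Fin m → Fin m → ℝ) =>
      hseq z.1 z.2 x ℓ := by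
  induction ℓ with
  | zero =>
    unfold hseq relu mulVec
    fun_prop
  | succ ℓ ih =>
    have ih' := ih (by omega)
    simp only [hseq_succ _ _ _ (show ℓ < L from h)]
    unfold relu mulVec
    fun_prop

/-- The truncated martingale `∑_j (‖h_j‖² - ‖h_{j-1}‖²)` started from `‖h_0‖² - 1`, where the
increment is dropped whenever `‖h_{j-1}‖² > 2`. -/
def dev (A : Fin m → Fin 𝔡 → ℝ) (W : Fin L → Fin m → Fin m → ℝ) (x : Fin 𝔡 → ℝ) : ℕ → ℝ
  | 0 => nsq (hseq A W x 0) - 1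
  | ℓ + 1 => dev A W x ℓ +
      if nsq (hseq A W x ℓ) ≤ 2 then nsq (hseq A W x (ℓ + 1)) - nsq (hseq A W x ℓ) else 0

lemma dev_update (A : Fin m → Fin 𝔡 → ℝ) (W : Fin L → Fin m → Fin m → ℝ) (x : Fin 𝔡 → ℝ)
    (i : Fin L) (w : Fin m → Fin m → ℝ) {ℓ : ℕ} (h : ℓ ≤ i) :
    dev A (Function.update W i w) x ℓ = dev A W x ℓ := by
  induction ℓ with
  | zero => simp only [dev, hseq_update A W x i w h]
  | succ ℓ ih =>
    simp only [dev, hseq_update A W x i w h, hseq_update A W x i w (by omega : ℓ ≤ i),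
      ih (by omega)]

lemma measurable_dev (x : Fin 𝔡 → ℝ) {ℓ : ℕ} (h : ℓ ≤ L) :
    Measurable fun z : (Fin m → Fin 𝔡 → ℝ) × (Fin L → Fin m → Fin m → ℝ) =>
      dev z.1 z.2 x ℓ := by
  have hn : ∀ {j : ℕ}, j ≤ L →
      Measurable fun z : (Fin m → Fin 𝔡 → ℝ) × (Fin L → Fin m → Fin m → ℝ) =>
        nsq (hseq z.1 z.2 x j) := by
    intro j hj
    have := measurable_hseq (m := m) x hj
    simp only [nsq]
    fun_prop
  induction ℓ with
  | zero =>
    simp only [dev]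
    exact (hn (Nat.zero_le _)).sub_const 1
  | succ ℓ ih =>
    simp only [dev]
    exact (ih (by omega)).add (Measurable.ite
      (measurableSet_le (hn (by omega)) measurable_const)
      ((hn h).sub (hn (by omega))) measurable_const)

/-- As long as the truncated martingale stays within `ε ≤ 1` of zero, the truncation is never
active and the martingale is exactly `‖h_ℓ‖² - 1`. -/
lemma nsq_hseq_eq (A : Fin m → Fin 𝔡 → ℝ) (W : Fin L → Fin m → Fin m → ℝ) (x : Fin 𝔡 → ℝ)
    {ε : ℝ} (hε : ε ≤ 1) (hd : ∀ ℓ ≤ L, |dev A W x ℓ| ≤ ε) {ℓ : ℕ} (h : ℓ ≤ L) :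
    nsq (hseq A W x ℓ) = 1 + dev A W x ℓ := by
  induction ℓ with
  | zero => simp only [dev]; ring
  | succ ℓ ih =>
    have ih' := ih (by omega)
    have hle : nsq (hseq A W x ℓ) ≤ 2 := by
      linarith [(abs_le.mp (hd ℓ (by omega))).2]
    simp only [dev, if_pos hle]
    linarith

/-- Exponential moment of the truncated martingale: each layer contributes at most one factor
`exp (24 t² / m)`, by integrating its own weight matrix first. -/
lemma lintegral_exp_dev (hm : 0 < m) (x : Fin 𝔡 → ℝ) (hx : nsq x = 1) (t : ℝ)
    (ht : |t| ≤ m / 32) {ℓ : ℕ} (h : ℓ ≤ L) :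
    ∫⁻ z, ENNReal.ofReal (Real.exp (t * dev z.1 z.2 x ℓ)) ∂initAW 𝔡 m L ≤
      ENNReal.ofReal (Real.exp (24 * t ^ 2 / m)) ^ (ℓ + 1) := by
  have hmeas : ∀ {j : ℕ}, j ≤ L →
      Measurable fun z : (Fin m → Fin 𝔡 → ℝ) × (Fin L → Fin m → Fin m → ℝ) =>
        ENNReal.ofReal (Real.exp (t * dev z.1 z.2 x j)) := fun hj =>
    ((measurable_dev x hj).const_mul t).exp.ennreal_ofReal
  induction ℓ with
  | zero =>
    rw [initAW, lintegral_prod _ (hmeas h).aemeasurable]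
    simp only [dev, hseq, lintegral_const, measure_univ, mul_one, zero_add, pow_one]
    have := lintegral_exp_layer hm x t (by rw [hx]; norm_num) ht
    rwa [hx] at this
  | succ ℓ ih =>
    have ih' := ih (by omega)
    set K := ENNReal.ofReal (Real.exp (24 * t ^ 2 / m)) with hK
    have hK1 : 1 ≤ K := by
      rw [hK, ENNReal.one_le_ofReal]
      exact Real.one_le_exp (by positivity)
    have hstep : ∀ (A : Fin m → Fin 𝔡 → ℝ) (W : Fin L → Fin m → Fin m → ℝ),
        ∫⁻ w, ENNReal.ofReal (Real.exp
          (t * dev A (Function.update W ⟨ℓ, h⟩ w) x (ℓ + 1))) ∂gaussMat m m (2 / m) ≤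
        ENNReal.ofReal (Real.exp (t * dev A W x ℓ)) * K := by
      intro A W
      have hu : ∀ w, hseq A (Function.update W ⟨ℓ, h⟩ w) x ℓ = hseq A W x ℓ := fun w =>
        hseq_update A W x ⟨ℓ, h⟩ w le_rfl
      simp only [dev, hseq_succ _ _ _ (show ℓ < L from h), hu,
        dev_update A W x ⟨ℓ, h⟩ _ (le_refl ℓ), Function.update_self]
      simp only [mul_add, Real.exp_add, ENNReal.ofReal_mul (Real.exp_nonneg _)]
      rw [lintegral_const_mul' _ _ ENNReal.ofReal_ne_top]
      gcongr
      by_cases hle : nsq (hseq A W x ℓ) ≤ 2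
      · simp only [if_pos hle]
        exact lintegral_exp_layer hm _ t hle ht
      · simpa [if_neg hle] using hK1
    rw [initAW, lintegral_prod _ (hmeas h).aemeasurable]
    calc _ ≤ ∫⁻ A, ∫⁻ W, ENNReal.ofReal (Real.exp (t * dev A W x ℓ)) * K
          ∂(Measure.pi fun _ : Fin L => gaussMat m m (2 / m)) ∂gaussMat m 𝔡 (2 / m) := by
          refine lintegral_mono fun A => ?_
          exact (lintegral_pi_resample (gaussMat m m (2 / m)) ⟨ℓ, h⟩
            ((hmeas h).comp (measurable_prodMk_left (x := A)))).trans_le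
            (lintegral_mono fun W => hstep A W)
      _ = (∫⁻ z, ENNReal.ofReal (Real.exp (t * dev z.1 z.2 x ℓ)) ∂initAW 𝔡 m L) * K := by
          rw [← lintegral_mul_const _ (hmeas (by omega)), initAW,
            lintegral_prod _ ((hmeas (by omega)).mul_const K).aemeasurable]
      _ ≤ K ^ (ℓ + 1 + 1) := by
          rw [pow_succ K (ℓ + 1)]
          gcongr

/-! ### Concentration -/

/-- Chernoff bound for both tails of the truncated martingale (`σ = 1` and `σ = -1`). -/
lemma initAW_dev_tail (hm : 0 < m) (hL : 2 ≤ L) (x : Fin 𝔡 → ℝ) (hx : nsq x = 1) {ε σ : ℝ}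
    (hε : 0 < ε) (hε1 : ε ≤ 1) (hσ : |σ| = 1) {ℓ : ℕ} (h : ℓ ≤ L) :
    initAW 𝔡 m L {z | ε ≤ σ * dev z.1 z.2 x ℓ} ≤
      ENNReal.ofReal (Real.exp (-(1 / 192 * m * ε ^ 2 / L))) := by
  have hm' : (0 : ℝ) < m := by exact_mod_cast hm
  have hL' : (2 : ℝ) ≤ L := by exact_mod_cast hL
  have hσ2 : σ ^ 2 = 1 := by rw [← sq_abs, hσ]; norm_num
  -- The minimizer of the Chernoff exponent `-t ε + 48 t² L / m`.
  set t : ℝ := m * ε / (96 * L) with htdef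
  have ht0 : 0 < t := by positivity
  have ht : |t * σ| ≤ m / 32 := by
    rw [abs_mul, hσ, mul_one, abs_of_pos ht0, htdef, div_le_div_iff₀ (by positivity) (by norm_num)]
    nlinarith
  have hmgf := lintegral_exp_dev (L := L) hm x hx (t * σ) ht h
  rw [← ENNReal.ofReal_pow (by positivity), ← Real.exp_nat_mul] at hmgf
  have hmk := mul_meas_ge_le_lintegral₀ (μ := initAW 𝔡 m L)
    (f := fun z => ENNReal.ofReal (Real.exp (t * σ * dev z.1 z.2 x ℓ)))
    ((measurable_dev x h).const_mul (t * σ)).exp.ennreal_ofReal.aemeasurable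
    (ENNReal.ofReal (Real.exp (t * ε)))
  have hsub : {z : (Fin m → Fin 𝔡 → ℝ) × (Fin L → Fin m → Fin m → ℝ) |
      ε ≤ σ * dev z.1 z.2 x ℓ} ⊆ {z | ENNReal.ofReal (Real.exp (t * ε)) ≤
        ENNReal.ofReal (Real.exp (t * σ * dev z.1 z.2 x ℓ))} := by
    intro z hz
    apply ENNReal.ofReal_le_ofReal
    apply Real.exp_le_exp.mpr
    rw [mul_assoc]
    exact mul_le_mul_of_nonneg_left hz ht0.le
  have h1 : ENNReal.ofReal (Real.exp (t * ε)) * initAW 𝔡 m L {z | ε ≤ σ * dev z.1 z.2 x ℓ} ≤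
      ENNReal.ofReal (Real.exp (t * ε)) *
        ENNReal.ofReal (Real.exp (-(1 / 192 * m * ε ^ 2 / L))) := by
    refine (mul_le_mul_right (measure_mono hsub) _).trans ((hmk.trans hmgf).trans ?_)
    rw [← ENNReal.ofReal_mul (by positivity), ← Real.exp_add]
    apply ENNReal.ofReal_le_ofReal
    apply Real.exp_le_exp.mpr
    have hℓ : ((ℓ + 1 : ℕ) : ℝ) ≤ 2 * L := by
      have : ℓ + 1 ≤ 2 * L := by omega
      exact_mod_cast this
    calc ((ℓ + 1 : ℕ) : ℝ) * (24 * (t * σ) ^ 2 / m) ≤ 2 * L * (24 * (t * σ) ^ 2 / m) := by gcongr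
      _ = _ := by
        rw [mul_pow, hσ2, htdef]
        field_simp
        ring
  exact (ENNReal.mul_le_mul_iff_right
    (by simpa using Real.exp_pos _) ENNReal.ofReal_ne_top).mp h1

lemma l2_mem_of_abs_nsq_sub_one_le {p : ℕ} (v : Fin p → ℝ) {ε : ℝ} (h : |nsq v - 1| ≤ ε) :
    1 - ε ≤ l2 v ∧ l2 v ≤ 1 + ε := by
  have h0 : 0 ≤ l2 v := Real.sqrt_nonneg _
  have hsq : l2 v ^ 2 = nsq v := Real.sq_sqrt (nsq_nonneg v)
  have hle : |l2 v - 1| ≤ |nsq v - 1| := by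
    rw [← hsq, show l2 v ^ 2 - 1 = (l2 v - 1) * (l2 v + 1) by ring, abs_mul,
      abs_of_nonneg (by linarith : 0 ≤ l2 v + 1)]
    nlinarith [abs_nonneg (l2 v - 1)]
  have := abs_le.mp (hle.trans h)
  constructor <;> linarith

/-- Lemma 7.1, forward propagation at random initialization. -/
theorem statement5 :
    ∃ C c : ℝ, 0 < C ∧ 0 < c ∧
      ∀ (𝔡 m L n : ℕ) (h𝔡 : 0 < 𝔡) (hL : 2 ≤ L) (hn : 0 < n),
        C ≤ (m : ℝ) →
        ∀ (x : Fin n → Fin 𝔡 → ℝ), (∀ i, l2 (x i) = 1) →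
        ∀ ε : ℝ, 0 < ε → ε ≤ 1 →
        ENNReal.ofReal (1 - C * (n : ℝ) * (L : ℝ) *
            Real.exp (-(c * (m : ℝ) * ε ^ 2 / (L : ℝ)))) ≤
          initAW 𝔡 m L
            {z | ∀ (i : Fin n) (ℓ : ℕ), ℓ ≤ L →
              1 - ε ≤ l2 (hseq z.1 z.2 (x i) ℓ) ∧ l2 (hseq z.1 z.2 (x i) ℓ) ≤ 1 + ε} := by
  refine ⟨4, 1 / 192, by norm_num, by norm_num, ?_⟩
  intro 𝔡 m L n h𝔡 hL hn hm x hx ε hε hε1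
  have hm0 : 0 < m := by
    have : (0 : ℝ) < m := by linarith
    exact_mod_cast this
  have hx' : ∀ i, nsq (x i) = 1 := by
    intro i
    have h1 : l2 (x i) ^ 2 = nsq (x i) := Real.sq_sqrt (nsq_nonneg _)
    rw [← h1, hx i, one_pow]
  have hprob : IsProbabilityMeasure (initAW 𝔡 m L) := by unfold initAW; infer_instance
  set δ : ℝ := Real.exp (-(1 / 192 * (m : ℝ) * ε ^ 2 / (L : ℝ))) with hδ
  have hδ0 : 0 < δ := Real.exp_pos _
  set good := {z : (Fin m → Fin 𝔡 → ℝ) × (Fin L → Fin m → Fin m → ℝ) |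
    ∀ (i : Fin n) (ℓ : ℕ), ℓ ≤ L →
      1 - ε ≤ l2 (hseq z.1 z.2 (x i) ℓ) ∧ l2 (hseq z.1 z.2 (x i) ℓ) ≤ 1 + ε} with hgood
  set bad : Fin n → Fin (L + 1) → Set ((Fin m → Fin 𝔡 → ℝ) × (Fin L → Fin m → Fin m → ℝ)) :=
    fun i ℓ => {z | ε ≤ 1 * dev z.1 z.2 (x i) ℓ} ∪ {z | ε ≤ -1 * dev z.1 z.2 (x i) ℓ} with hbad
  have hcover : goodᶜ ⊆ ⋃ i, ⋃ ℓ, bad i ℓ := by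
    intro z hz
    by_contra hnot
    apply hz
    intro i ℓ hℓ
    have hd : ∀ j ≤ L, |dev z.1 z.2 (x i) j| ≤ ε := by
      intro j hj
      have hzj : z ∉ bad i ⟨j, by omega⟩ := fun hin =>
        hnot (Set.mem_iUnion₂.mpr ⟨i, ⟨j, by omega⟩, hin⟩)
      simp only [hbad, Set.mem_union, Set.mem_ofPred_eq, not_or, not_le] at hzj
      exact abs_le.mpr ⟨by linarith [hzj.2], by linarith [hzj.1]⟩
    apply l2_mem_of_abs_nsq_sub_one_le
    rw [nsq_hseq_eq z.1 z.2 (x i) hε1 hd hℓ, add_sub_cancel_left]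
    exact hd ℓ hℓ
  have hbadle : ∀ i ℓ, initAW 𝔡 m L (bad i ℓ) ≤ ENNReal.ofReal (2 * δ) := by
    intro i ℓ
    have hℓ : (ℓ : ℕ) ≤ L := by omega
    rw [two_mul, ENNReal.ofReal_add hδ0.le hδ0.le]
    exact (measure_union_le _ _).trans (add_le_add
      (initAW_dev_tail hm0 hL (x i) (hx' i) hε hε1 (by norm_num) hℓ)
      (initAW_dev_tail hm0 hL (x i) (hx' i) hε hε1 (by norm_num) hℓ))
  have hcompl : initAW 𝔡 m L goodᶜ ≤ ENNReal.ofReal (4 * n * L * δ) := by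
    calc initAW 𝔡 m L goodᶜ ≤ ∑ i, ∑ ℓ, initAW 𝔡 m L (bad i ℓ) :=
          (measure_mono hcover).trans ((measure_iUnion_fintype_le _ _).trans
            (Finset.sum_le_sum fun i _ => measure_iUnion_fintype_le _ _))
      _ ≤ ∑ _i : Fin n, ∑ _ℓ : Fin (L + 1), ENNReal.ofReal (2 * δ) :=
          Finset.sum_le_sum fun i _ => Finset.sum_le_sum fun ℓ _ => hbadle i ℓ
      _ = ENNReal.ofReal (n * ((L + 1 : ℕ) * (2 * δ))) := by
          rw [ENNReal.ofReal_mul (by positivity), ENNReal.ofReal_mul (by positivity)]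
          simp [-Nat.cast_add]
      _ ≤ ENNReal.ofReal (4 * n * L * δ) := by
          apply ENNReal.ofReal_le_ofReal
          have h1 : ((L + 1 : ℕ) : ℝ) ≤ 2 * L := by
            have : L + 1 ≤ 2 * L := by omega
            exact_mod_cast this
          calc (n : ℝ) * ((L + 1 : ℕ) * (2 * δ)) ≤ n * (2 * L * (2 * δ)) := by gcongr
            _ = _ := by ring
  rw [ENNReal.ofReal_sub _ (by positivity), ENNReal.ofReal_one, tsub_le_iff_right]
  calc (1 : ENNReal) = initAW 𝔡 m L (good ∪ goodᶜ) := by rw [Set.union_compl_self, measure_univ]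
    _ ≤ initAW 𝔡 m L good + initAW 𝔡 m L goodᶜ := measure_union_le _ _
    _ ≤ _ := by gcongr

end DNNPaper
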